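/- (Per-element norm equivalence for the discrete weak curl, Lemma 5.3 of the paper.) Let T ⊂ ℝ³ be a nonempty bounded open set whose boundary satisfies ∂T = ⋃_{i=1}^N cl(e_i), where, for affine maps l₁, …, l_N : ℝ³ → ℝ of the form l_i(x) = ⟨a_i, x⟩ + b_i with a_i ≠ 0 and with the hyperplanes l_i⁻¹(0) pairwise distinct, each face e_i is a nonempty relatively open subset of the hyperplane l_i⁻¹(0), μH²(cl(e_i) ∩ cl(e_j)) = 0 for i ≠ j, and μH²(∂T) < ∞; suppose further there exists M ∈ T with l_i(M) ≠ 0 for all i. Let n_i = a_i/|a_i| be the unit normal of the i-th face plane, let k ≥ 1 be an integer and let r ≥ max(2N + k − 1, k + 2(N−1)). Then there exist constants C₁, C₂ > 0, depending only on T, the faces, k and r, with the following property: for every polynomial vector field v₀ of degree at most k on ℝ³, every v_b : ∂T → ℝ³ that agrees on each face e_i with (the restriction of) a polynomial vector field of degree at most k, and every polynomial vector field W of degree at most r satisfying ∫_T W·q dx = ∫_T (∇×v₀)·q dx − ∫_{∂T} ((v_b − v₀)×n)·q dμH² for all polynomial vector fields q of degree at most r (where n = n_i on e_i), one has C₁ (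 ‖∇×v₀‖²_{L²(T)} + Σ_{i=1}^N ∫_{e_i} |(v_b − v₀)×n_i|² dμH² ) ≤ ‖W‖²_{L²(T)} ≤ C₂ ( ‖∇×v₀‖²_{L²(T)} + Σ_{i=1}^N ∫_{e_i} |(v_b − v₀)×n_i|² dμH² ). -/

import Mathlib

open MeasureTheory RealInnerProductSpace

/-- Euclidean 3-space. -/
abbrev E3 := EuclideanSpace ℝ (Fin 3)

/-- `f` is a polynomial function of total degree at most `k` on `ℝ³`. -/
def IsPolyFun3 (k : ℕ) (f : E3 → ℝ) : Prop :=
  ∃ P : MvPolynomial (Fin 3) ℝ, P.totalDegree ≤ k ∧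
    ∀ x : E3, f x = MvPolynomial.eval (fun i => x i) P

/-- `F` is a polynomial vector field of degree at most `k` on `ℝ³`. -/
def IsPolyVF (k : ℕ) (F : E3 → E3) : Prop :=
  ∀ i : Fin 3, IsPolyFun3 k (fun x => F x i)

/-- The curl `∇×F = (∂₂F₃ − ∂₃F₂, ∂₃F₁ − ∂₁F₃, ∂₁F₂ − ∂₂F₁)` of a vector field on `ℝ³`. -/
noncomputable def curl3 (F : E3 → E3) (x : E3) : E3 :=
  (WithLp.equiv 2 (Fin 3 → ℝ)).symm
    ![fderiv ℝ (fun y => F y 2) x (EuclideanSpace.single 1 (1 : ℝ)) -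
        fderiv ℝ (fun y => F y 1) x (EuclideanSpace.single 2 (1 : ℝ)),
      fderiv ℝ (fun y => F y 0) x (EuclideanSpace.single 2 (1 : ℝ)) -
        fderiv ℝ (fun y => F y 2) x (EuclideanSpace.single 0 (1 : ℝ)),
      fderiv ℝ (fun y => F y 1) x (EuclideanSpace.single 0 (1 : ℝ)) -
        fderiv ℝ (fun y => F y 0) x (EuclideanSpace.single 1 (1 : ℝ))]

/-- The cross product of vectors in `ℝ³`. -/
noncomputable def cross3 (u v : E3) : E3 :=
  (WithLp.equiv 2 (Fin 3 → ℝ)).symm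
    ![u 1 * v 2 - u 2 * v 1, u 2 * v 0 - u 0 * v 2, u 0 * v 1 - u 1 * v 0]

/-!
Integrating against the test fields, the weak curl `W` is the Riesz representative, in the
finite-dimensional space of polynomial fields, of a functional depending only on the data
`(∇×v₀, (v_b − v₀)×n_i)`. On a finite-dimensional space, two quadratic seminorms are equivalent as
soon as they have the same kernel, so it suffices that the data vanish almost everywhere when
`W = 0`. Testing with `(∏ l_i)² ∇×v₀`, which vanishes on all faces, kills `∇×v₀` off the null set
`⋃ {l_i = 0}`. Testing then with `(∏_{i ≠ κ} l_i)² (v_b − v₀)×n_κ`, which vanishes on all faces but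
the `κ`-th, kills the jump on that face off its intersection with the other face planes, which has
dimension less than two. The degree bounds on `r` make both test fields admissible.
-/

section FiniteDimensional

theorem exists_norm_le_of_ker_le {V H K : Type*} [AddCommGroup V] [Module ℝ V]
    [Module.Finite ℝ V] [NormedAddCommGroup H] [NormedSpace ℝ H] [NormedAddCommGroup K]
    [NormedSpace ℝ K] {A : V →ₗ[ℝ] H} {B : V →ₗ[ℝ] K} (h : A.ker ≤ B.ker) :
    ∃ C : ℝ, 0 < C ∧ ∀ v, ‖B v‖ ≤ C * ‖A v‖ := by
  let L : A.range →L[ℝ] K :=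
    (A.ker.liftQ B h ∘ₗ A.quotKerEquivRange.symm.toLinearMap).toContinuousLinearMap
  have hL : ∀ v, L (A.rangeRestrict v) = B v := fun v =>
    congrArg (A.ker.liftQ B h) (A.quotKerEquivRange_symm_apply_image v (A.mem_range_self v))
  obtain ⟨C, hC, hLC⟩ := L.bound
  exact ⟨C, hC, fun v => hL v ▸ hLC (A.rangeRestrict v)⟩

theorem exists_norm_sq_equiv_of_forall_inner_eq {V P H E : Type*}
    [AddCommGroup V] [Module ℝ V] [Module.Finite ℝ V]
    [AddCommGroup P] [Module ℝ P] [Module.Finite ℝ P]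
    [NormedAddCommGroup H] [InnerProductSpace ℝ H] [NormedAddCommGroup E] [InnerProductSpace ℝ E]
    (D : V →ₗ[ℝ] E) (τ : P →ₗ[ℝ] H) (G : P →ₗ[ℝ] E)
    (hD : ∀ x, (∀ q, ⟪D x, G q⟫ = 0) → D x = 0) :
    ∃ C₁ : ℝ, 0 < C₁ ∧ ∃ C₂ : ℝ, 0 < C₂ ∧
      ∀ x w, (∀ q, ⟪τ w, τ q⟫ = ⟪D x, G q⟫) →
        C₁ * ‖D x‖ ^ 2 ≤ ‖τ w‖ ^ 2 ∧ ‖τ w‖ ^ 2 ≤ C₂ * ‖D x‖ ^ 2 := by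
  let S : Submodule ℝ (V × P) :=
    { carrier := {z | ∀ q, ⟪τ z.2, τ q⟫ = ⟪D z.1, G q⟫}
      add_mem' := fun hz hz' q => by simp [inner_add_left, hz q, hz' q]
      zero_mem' := fun q => by simp
      smul_mem' := fun c z hz q => by simp [real_inner_smul_left, hz q] }
  let data : S →ₗ[ℝ] E := D ∘ₗ LinearMap.fst ℝ V P ∘ₗ S.subtype
  let solution : S →ₗ[ℝ] H := τ ∘ₗ LinearMap.snd ℝ V P ∘ₗ S.subtype
  have ker_data : data.ker ≤ solution.ker := by
    rintro ⟨⟨x, w⟩, hS⟩ (hx : D x = 0)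
    have hw := hS w
    rwa [hx, inner_zero_left, inner_self_eq_zero] at hw
  have ker_solution : solution.ker ≤ data.ker := by
    rintro ⟨⟨x, w⟩, hS⟩ (hw : τ w = 0)
    exact hD x fun q => by rw [← hS q, hw, inner_zero_left]
  obtain ⟨C, hC, data_le⟩ := exists_norm_le_of_ker_le ker_solution
  obtain ⟨C', hC', solution_le⟩ := exists_norm_le_of_ker_le ker_data
  refine ⟨(C ^ 2)⁻¹, by positivity, C' ^ 2, by positivity, fun x w hS => ⟨?_, ?_⟩⟩
  · rw [inv_mul_le_iff₀ (by positivity), ← mul_pow]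
    exact pow_le_pow_left₀ (norm_nonneg _) (data_le ⟨(x, w), hS⟩) 2
  · rw [← mul_pow]
    exact pow_le_pow_left₀ (norm_nonneg _) (solution_le ⟨(x, w), hS⟩) 2

end FiniteDimensional

section L2

variable {X F : Type*} [TopologicalSpace X] [MeasurableSpace X] [NormedAddCommGroup F]
  [InnerProductSpace ℝ F]

/-- The map from the continuous maps to `L²(ν)`, for a measure `ν` against which all of them are
square integrable; it is not injective when `ν` does not have full support. -/
noncomputable def continuousToL2 (ν : Measure X) (hν : ∀ f : C(X, F), MemLp f 2 ν) :
    C(X, F) →ₗ[ℝ] Lp F 2 ν where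
  toFun f := (hν f).toLp
  map_add' f g := MemLp.toLp_add (hν f) (hν g)
  map_smul' c f := MemLp.toLp_const_smul c (hν f)

variable {ν : Measure X} (hν : ∀ f : C(X, F), MemLp f 2 ν)

theorem inner_continuousToL2 (f g : C(X, F)) :
    ⟪continuousToL2 ν hν f, continuousToL2 ν hν g⟫ = ∫ x, ⟪f x, g x⟫ ∂ν := by
  rw [L2.inner_def]
  apply integral_congr_ae
  filter_upwards [(hν f).coeFn_toLp, (hν g).coeFn_toLp] with x hf hg
  exact congrArg₂ (fun u v : F => ⟪u, v⟫) hf hg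

theorem norm_sq_continuousToL2 (f : C(X, F)) :
    ‖continuousToL2 ν hν f‖ ^ 2 = ∫ x, ‖f x‖ ^ 2 ∂ν := by
  simp only [← real_inner_self_eq_norm_sq, inner_continuousToL2]

theorem continuousToL2_eq_zero_iff (f : C(X, F)) :
    continuousToL2 ν hν f = 0 ↔ ∀ᵐ x ∂ν, f x = 0 :=
  (MemLp.toLp_eq_toLp_iff (hν f) (MemLp.zero : MemLp (0 : X → F) 2 ν))

include hν in
theorem ae_eq_zero_of_integral_inner_sq_smul_eq_zero {ψ : C(X, ℝ)} (hψ : ∀ᵐ x ∂ν, ψ x ≠ 0)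
    {f : C(X, F)} (h : ∫ x, ⟪f x, (ψ ^ 2 • f) x⟫ ∂ν = 0) : ∀ᵐ x ∂ν, f x = 0 := by
  have hnorm : ∀ x, ⟪f x, (ψ ^ 2 • f) x⟫ = ‖(ψ • f) x‖ ^ 2 := fun x => by
    simp [real_inner_smul_right, norm_smul, mul_pow]
  rw [integral_congr_ae (.of_forall hnorm), ← norm_sq_continuousToL2 hν, sq_eq_zero_iff,
    norm_eq_zero, continuousToL2_eq_zero_iff] at h
  filter_upwards [h, hψ] with x hx hψx
  exact (smul_eq_zero.1 hx).resolve_left hψx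

end L2

section Bubble

variable {X F ι : Type*} [TopologicalSpace X] [MeasurableSpace X] [NormedAddCommGroup F]
  [InnerProductSpace ℝ F]

/-- The map sending a continuous interior datum and one continuous datum per face to their joint
`L²` class, in the Hilbert direct sum of `L²(ν)` and the spaces `L²(μ i)` of the faces. -/
noncomputable def interiorFaceToL2 (ν : Measure X) (μ : ι → Measure X)
    (hν : ∀ f : C(X, F), MemLp f 2 ν) (hμ : ∀ i, ∀ f : C(X, F), MemLp f 2 (μ i)) :
    C(X, F) × (ι → C(X, F)) →ₗ[ℝ] WithLp 2 (Lp F 2 ν × PiLp 2 fun i => Lp F 2 (μ i)) where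
  toFun z := .toLp 2
    (continuousToL2 ν hν z.1, .toLp 2 fun i => continuousToL2 (μ i) (hμ i) (z.2 i))
  map_add' z z' := by simp [← WithLp.toLp_add, Pi.add_def]
  map_smul' c z := by simp [← WithLp.toLp_smul, Pi.smul_def]

variable {ν : Measure X} {μ : ι → Measure X}
  (hν : ∀ f : C(X, F), MemLp f 2 ν) (hμ : ∀ i, ∀ f : C(X, F), MemLp f 2 (μ i))

theorem interiorFaceToL2_apply (z : C(X, F) × (ι → C(X, F))) :
    interiorFaceToL2 ν μ hν hμ z = .toLp 2
      (continuousToL2 ν hν z.1, .toLp 2 fun i => continuousToL2 (μ i) (hμ i) (z.2 i)) :=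
  rfl

theorem interiorFaceToL2_eq_zero {f : C(X, F)} {g : ι → C(X, F)} (hf : ∀ᵐ x ∂ν, f x = 0)
    (hg : ∀ i, ∀ᵐ x ∂μ i, g i x = 0) : interiorFaceToL2 ν μ hν hμ (f, g) = 0 := by
  have hf' := (continuousToL2_eq_zero_iff hν f).2 hf
  have hg' := fun i => (continuousToL2_eq_zero_iff (hμ i) (g i)).2 (hg i)
  simp [interiorFaceToL2_apply, hf', hg', ← Pi.zero_def]

variable [Fintype ι]

theorem inner_interiorFaceToL2 (f f' : C(X, F)) (g g' : ι → C(X, F)) :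
    ⟪interiorFaceToL2 ν μ hν hμ (f, g), interiorFaceToL2 ν μ hν hμ (f', g')⟫ =
      (∫ x, ⟪f x, f' x⟫ ∂ν) + ∑ i, ∫ x, ⟪g i x, g' i x⟫ ∂μ i := by
  simp [interiorFaceToL2_apply, WithLp.prod_inner_apply, PiLp.inner_apply, inner_continuousToL2]

theorem norm_sq_interiorFaceToL2 (f : C(X, F)) (g : ι → C(X, F)) :
    ‖interiorFaceToL2 ν μ hν hμ (f, g)‖ ^ 2 =
      (∫ x, ‖f x‖ ^ 2 ∂ν) + ∑ i, ∫ x, ‖g i x‖ ^ 2 ∂μ i := by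
  simp only [← real_inner_self_eq_norm_sq, inner_interiorFaceToL2]

theorem integral_inner_sq_smul_eq_zero {ψ : C(X, ℝ)} (hψ : ∀ᵐ x ∂ν, ψ x = 0) (f g : C(X, F)) :
    ∫ x, ⟪g x, (ψ ^ 2 • f) x⟫ ∂ν = 0 :=
  integral_eq_zero_of_ae <| by filter_upwards [hψ] with x hx; simp [hx]

include hν hμ in
theorem ae_eq_zero_of_forall_integral_inner_eq
    {ψ : C(X, ℝ)} (hψν : ∀ᵐ x ∂ν, ψ x ≠ 0) (hψμ : ∀ i, ∀ᵐ x ∂μ i, ψ x = 0)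
    {φ : ι → C(X, ℝ)} (hφ : ∀ i, ∀ᵐ x ∂μ i, φ i x ≠ 0)
    (hφ_of_ne : ∀ i j, i ≠ j → ∀ᵐ x ∂μ i, φ j x = 0)
    {f : C(X, F)} {g : ι → C(X, F)} {P : Set C(X, F)} (hψP : ψ ^ 2 • f ∈ P)
    (hφP : ∀ i, φ i ^ 2 • g i ∈ P)
    (h : ∀ q ∈ P, ∫ x, ⟪f x, q x⟫ ∂ν = ∑ i, ∫ x, ⟪g i x, q x⟫ ∂μ i) :
    (∀ᵐ x ∂ν, f x = 0) ∧ ∀ i, ∀ᵐ x ∂μ i, g i x = 0 := by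
  have hf : ∀ᵐ x ∂ν, f x = 0 := by
    refine ae_eq_zero_of_integral_inner_sq_smul_eq_zero hν hψν ?_
    rw [h _ hψP]
    exact Finset.sum_eq_zero fun i _ => integral_inner_sq_smul_eq_zero (hψμ i) f (g i)
  refine ⟨hf, fun i => ae_eq_zero_of_integral_inner_sq_smul_eq_zero (hμ i) (hφ i) ?_⟩
  rw [← Finset.sum_eq_single i
    (fun j _ hji => integral_inner_sq_smul_eq_zero (hφ_of_ne j i hji) (g i) (g j))
    (fun hi => absurd (Finset.mem_univ i) hi),
    ← h _ (hφP i)]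
  exact integral_eq_zero_of_ae <| by filter_upwards [hf] with x hx; simp [hx]

include hν hμ in
theorem exists_norm_sq_equiv_of_bubbles {V P : Submodule ℝ C(X, F)} {V' : ι → Submodule ℝ C(X, F)}
    (hV : V.FG) (hP : P.FG) (hV' : ∀ i, (V' i).FG)
    {ψ : C(X, ℝ)} (hψν : ∀ᵐ x ∂ν, ψ x ≠ 0) (hψμ : ∀ i, ∀ᵐ x ∂μ i, ψ x = 0)
    (hψP : ∀ f ∈ V, ψ ^ 2 • f ∈ P)
    {φ : ι → C(X, ℝ)} (hφ : ∀ i, ∀ᵐ x ∂μ i, φ i x ≠ 0)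
    (hφ_of_ne : ∀ i j, i ≠ j → ∀ᵐ x ∂μ i, φ j x = 0) (hφP : ∀ i, ∀ f ∈ V' i, φ i ^ 2 • f ∈ P) :
    ∃ C₁ : ℝ, 0 < C₁ ∧ ∃ C₂ : ℝ, 0 < C₂ ∧
      ∀ f ∈ V, ∀ g : ι → C(X, F), (∀ i, g i ∈ V' i) → ∀ w ∈ P,
        (∀ q ∈ P, ∫ x, ⟪w x, q x⟫ ∂ν =
          (∫ x, ⟪f x, q x⟫ ∂ν) - ∑ i, ∫ x, ⟪g i x, q x⟫ ∂μ i) →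
        C₁ * ((∫ x, ‖f x‖ ^ 2 ∂ν) + ∑ i, ∫ x, ‖g i x‖ ^ 2 ∂μ i) ≤ ∫ x, ‖w x‖ ^ 2 ∂ν ∧
        ∫ x, ‖w x‖ ^ 2 ∂ν ≤ C₂ * ((∫ x, ‖f x‖ ^ 2 ∂ν) + ∑ i, ∫ x, ‖g i x‖ ^ 2 ∂μ i) := by
  have := Module.Finite.iff_fg.2 hV
  have := Module.Finite.iff_fg.2 hP
  have := fun i => Module.Finite.iff_fg.2 (hV' i)
  let D : V × (∀ i, V' i) →ₗ[ℝ] _ := interiorFaceToL2 ν μ hν hμ ∘ₗ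
    V.subtype.prodMap (LinearMap.pi fun i => (V' i).subtype ∘ₗ LinearMap.proj i)
  let G : P →ₗ[ℝ] _ := interiorFaceToL2 ν μ hν hμ ∘ₗ
    (LinearMap.id.prod (-LinearMap.pi fun _ => LinearMap.id)) ∘ₗ P.subtype
  have inner_D_G : ∀ x q, ⟪D x, G q⟫ =
      (∫ y, ⟪x.1.1 y, q.1 y⟫ ∂ν) - ∑ i, ∫ y, ⟪(x.2 i).1 y, q.1 y⟫ ∂μ i := fun x q =>
    (inner_interiorFaceToL2 hν hμ _ _ _ _).trans <| by
      simp [integral_neg, sub_eq_add_neg]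
  have norm_sq_D : ∀ x, ‖D x‖ ^ 2 =
      (∫ y, ‖x.1.1 y‖ ^ 2 ∂ν) + ∑ i, ∫ y, ‖(x.2 i).1 y‖ ^ 2 ∂μ i := fun x =>
    norm_sq_interiorFaceToL2 hν hμ _ _
  have hD : ∀ x, (∀ q, ⟪D x, G q⟫ = 0) → D x = 0 := by
    intro x hx
    obtain ⟨hf, hg⟩ := ae_eq_zero_of_forall_integral_inner_eq hν hμ hψν hψμ hφ hφ_of_ne
      (hψP _ x.1.2) (fun i => hφP i _ (x.2 i).2)
      (fun q hq => sub_eq_zero.1 ((inner_D_G x ⟨q, hq⟩).symm.trans (hx ⟨q, hq⟩)))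
    exact interiorFaceToL2_eq_zero hν hμ hf hg
  obtain ⟨C₁, hC₁, C₂, hC₂, hequiv⟩ :=
    exists_norm_sq_equiv_of_forall_inner_eq D (continuousToL2 ν hν ∘ₗ P.subtype) G hD
  refine ⟨C₁, hC₁, C₂, hC₂, fun f hf g hg w hw hweak => ?_⟩
  have hle := hequiv (⟨f, hf⟩, fun i => ⟨g i, hg i⟩) ⟨w, hw⟩ fun q => by
    rw [inner_D_G, ← hweak q q.2]
    exact inner_continuousToL2 hν w q
  rw [norm_sq_D] at hle
  simpa only [LinearMap.comp_apply, Submodule.subtype_apply, norm_sq_continuousToL2] using hle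

end Bubble

section HausdorffMeasure

variable {E : Type*} [NormedAddCommGroup E] [NormedSpace ℝ E] [FiniteDimensional ℝ E]
  [MeasurableSpace E] [BorelSpace E] {n : ℕ} {P Q : AffineSubspace ℝ E}

theorem hausdorffMeasure_lt_top_of_subset_affineSubspace {s : Set E}
    (hn : Module.finrank ℝ P.direction = n) (hs : Bornology.IsBounded s) (hsP : s ⊆ P) :
    μH[n] s < ⊤ := by
  subst hn
  obtain rfl | ⟨p, hp⟩ := s.eq_empty_or_nonempty
  · simp
  let f : P.direction → E := fun v => (v : E) + p
  have hf : Isometry f := (IsometryEquiv.addRight p).isometry.comp isometry_subtype_coe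
  have hrange : s ⊆ Set.range f := fun x hx =>
    ⟨⟨x - p, AffineSubspace.vsub_mem_direction (hsP hx) (hsP hp)⟩, sub_add_cancel x p⟩
  have := isAddHaarMeasure_hausdorffMeasure (E := P.direction)
  rw [← Set.image_preimage_eq_of_subset hrange, hf.hausdorffMeasure_image (.inl (by positivity))]
  exact (hf.antilipschitz.isBounded_preimage hs).measure_lt_top

theorem hausdorffMeasure_inf_affineSubspace_eq_zero (hn : Module.finrank ℝ P.direction = n)
    (h : ¬P ≤ Q) : μH[n] ((P ⊓ Q : AffineSubspace ℝ E) : Set E) = 0 := by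
  obtain hempty | hne := ((P ⊓ Q : AffineSubspace ℝ E) : Set E).eq_empty_or_nonempty
  · rw [hempty, measure_empty]
  have hlt : (P ⊓ Q).direction < P.direction :=
    AffineSubspace.direction_lt_of_nonempty (inf_lt_left.2 h) hne
  rw [← NNReal.coe_natCast]
  apply hausdorffMeasure_of_dimH_lt
  have hconvex : Convex ℝ ((P ⊓ Q : AffineSubspace ℝ E) : Set E) := AffineSubspace.convex _
  rw [Real.Convex.dimH_eq_finrank_vectorSpan hconvex hne, ← hn]
  exact mod_cast Submodule.finrank_lt_finrank_of_lt hlt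

end HausdorffMeasure

theorem memLp_restrict_of_isBounded {X F : Type*} [PseudoMetricSpace X] [ProperSpace X]
    [MeasurableSpace X] [OpensMeasurableSpace X] [NormedAddCommGroup F] {μ : Measure X} {s : Set X}
    {f : X → F} (p : ENNReal) (hs : MeasurableSet s) (hb : Bornology.IsBounded s)
    (hμs : μ s < ⊤) (hf : Continuous f) : MemLp f p (μ.restrict s) := by
  have := isFiniteMeasure_restrict.2 hμs.ne
  obtain ⟨C, hC⟩ := hb.isCompact_closure.exists_bound_of_continuousOn hf.continuousOn
  refine .of_bound ?_ C (ae_restrict_of_forall_mem hs fun x hx => hC x (subset_closure hx))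
  exact (hf.stronglyMeasurable).aestronglyMeasurable

section Hyperplane

variable {E : Type*} [NormedAddCommGroup E] [InnerProductSpace ℝ E]

/-- The affine hyperplane `{x | ⟪a, x⟫ + b = 0}`, encoded by its normal `a ≠ 0` and its foot
`-(b / ‖a‖²) a` of the perpendicular from the origin. For `a = 0` it is the whole space. -/
noncomputable def hyperplane (a : E) (b : ℝ) : AffineSubspace ℝ E :=
  .mk' (-(b / ‖a‖ ^ 2) • a) (ℝ ∙ a)ᗮ

theorem mem_hyperplane_iff {a : E} (ha : a ≠ 0) (b : ℝ) (x : E) :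
    x ∈ hyperplane a b ↔ ⟪a, x⟫ + b = 0 := by
  have ha' : ‖a‖ ^ 2 ≠ 0 := pow_ne_zero 2 (norm_ne_zero_iff.2 ha)
  simp [hyperplane, AffineSubspace.mem_mk', Submodule.mem_orthogonal_singleton_iff_inner_right,
    inner_add_right, real_inner_smul_right, ha']

theorem finrank_direction_hyperplane {n : ℕ} (hE : Module.finrank ℝ E = n + 1) {a : E}
    (ha : a ≠ 0) (b : ℝ) : Module.finrank ℝ (hyperplane a b).direction = n := by
  have : Fact (Module.finrank ℝ E = n + 1) := ⟨hE⟩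
  rw [hyperplane, AffineSubspace.direction_mk',
    Submodule.finrank_orthogonal_span_singleton (n := n) ha]

theorem hyperplane_ne_top {a : E} (ha : a ≠ 0) (b : ℝ) : hyperplane a b ≠ ⊤ := by
  intro h
  have hdir := congrArg AffineSubspace.direction h
  rw [hyperplane, AffineSubspace.direction_mk', AffineSubspace.direction_top,
    Submodule.orthogonal_eq_top_iff, Submodule.span_singleton_eq_bot] at hdir
  exact ha hdir

theorem hyperplane_nonempty (a : E) (b : ℝ) : (hyperplane a b : Set E).Nonempty :=
  AffineSubspace.mk'_nonempty _ _

theorem hyperplane_eq_of_le [FiniteDimensional ℝ E] {a a' : E} (ha : a ≠ 0) (ha' : a' ≠ 0)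
    {b b' : ℝ} (h : hyperplane a b ≤ hyperplane a' b') : hyperplane a b = hyperplane a' b' := by
  have : Nontrivial E := ⟨a, 0, ha⟩
  obtain ⟨n, hn⟩ := Nat.exists_eq_succ_of_ne_zero (Module.finrank_pos (R := ℝ) (M := E)).ne'
  refine AffineSubspace.eq_of_direction_eq_of_nonempty_of_le ?_ (hyperplane_nonempty a b) h
  apply Submodule.eq_of_le_of_finrank_eq (AffineSubspace.direction_le h)
  rw [finrank_direction_hyperplane hn ha, finrank_direction_hyperplane hn ha']

section Measures

variable [FiniteDimensional ℝ E] [MeasurableSpace E] [BorelSpace E]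

theorem volume_hyperplane {a : E} (ha : a ≠ 0) (b : ℝ) : volume (hyperplane a b : Set E) = 0 :=
  Measure.addHaar_affineSubspace volume _ (hyperplane_ne_top ha b)

theorem hausdorffMeasure_restrict_hyperplane {n : ℕ} (hE : Module.finrank ℝ E = n + 1) {a a' : E}
    (ha : a ≠ 0) (ha' : a' ≠ 0) {b b' : ℝ} (h : hyperplane a b ≠ hyperplane a' b') {s : Set E}
    (hs : MeasurableSet s) (hsub : s ⊆ hyperplane a b) :
    (μH[n] : Measure E).restrict s (hyperplane a' b') = 0 := by
  rw [Measure.restrict_apply' hs, Set.inter_comm]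
  refine measure_mono_null (Set.inter_subset_inter_left _ hsub) ?_
  rw [← AffineSubspace.coe_inf]
  exact hausdorffMeasure_inf_affineSubspace_eq_zero (finrank_direction_hyperplane hE ha b)
    fun hle => h (hyperplane_eq_of_le ha ha' hle)

end Measures

/-- The bubble function `∏_{i ∈ s} l_i` of the affine functions `l_i x = ⟪a i, x⟫ + b i`; the
paper's bubble functions are the squares of these. -/
noncomputable def bubble {ι : Type*} (a : ι → E) (b : ι → ℝ) (s : Finset ι) : C(E, ℝ) :=
  ∏ i ∈ s, ⟨fun x => ⟪a i, x⟫ + b i, by fun_prop⟩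

theorem bubble_apply {ι : Type*} (a : ι → E) (b : ι → ℝ) (s : Finset ι) (x : E) :
    bubble a b s x = ∏ i ∈ s, (⟪a i, x⟫ + b i) := by
  simp [bubble]

theorem bubble_eq_zero_iff {ι : Type*} {a : ι → E} (ha : ∀ i, a i ≠ 0) (b : ι → ℝ) (s : Finset ι)
    (x : E) : bubble a b s x = 0 ↔ ∃ i ∈ s, x ∈ hyperplane (a i) (b i) := by
  simp only [bubble_apply, Finset.prod_eq_zero_iff, mem_hyperplane_iff (ha _)]

theorem ae_bubble_ne_zero {ι : Type*} [MeasurableSpace E] {ν : Measure E} {a : ι → E}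
    (ha : ∀ i, a i ≠ 0) {b : ι → ℝ} {s : Finset ι}
    (h : ∀ i ∈ s, ν (hyperplane (a i) (b i)) = 0) : ∀ᵐ x ∂ν, bubble a b s x ≠ 0 := by
  have hν : ∀ᵐ x ∂ν, ∀ i ∈ s, x ∉ hyperplane (a i) (b i) :=
    (ae_ball_iff s.countable_toSet).2 fun i hi => measure_eq_zero_iff_ae_notMem.1 (h i hi)
  filter_upwards [hν] with x hx hzero
  obtain ⟨i, hi, hxi⟩ := (bubble_eq_zero_iff ha b s x).1 hzero
  exact hx i hi hxi

theorem ae_bubble_eq_zero {ι : Type*} [MeasurableSpace E] {μ : Measure E} {a : ι → E}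
    (ha : ∀ i, a i ≠ 0) {b : ι → ℝ} {s : Finset ι} {i : ι} (hi : i ∈ s) {t : Set E}
    (ht : MeasurableSet t) (hsub : t ⊆ hyperplane (a i) (b i)) :
    ∀ᵐ x ∂μ.restrict t, bubble a b s x = 0 :=
  ae_restrict_of_forall_mem ht fun x hx => (bubble_eq_zero_iff ha b s x).2 ⟨i, hi, hsub hx⟩

end Hyperplane

theorem exists_norm_sq_equiv_of_polyhedron {E F ι : Type*} [NormedAddCommGroup E]
    [InnerProductSpace ℝ E] [FiniteDimensional ℝ E] [MeasurableSpace E] [BorelSpace E]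
    [NormedAddCommGroup F] [InnerProductSpace ℝ F] [Fintype ι] [DecidableEq ι] {n : ℕ}
    (hE : Module.finrank ℝ E = n + 1) {T : Set E} (hT : MeasurableSet T)
    (hTb : Bornology.IsBounded T) {a : ι → E} (ha : ∀ i, a i ≠ 0) {b : ι → ℝ}
    (hinj : Function.Injective fun i => hyperplane (a i) (b i))
    {e : ι → Set E} (he : ∀ i, MeasurableSet (e i)) (heb : ∀ i, Bornology.IsBounded (e i))
    (hsub : ∀ i, e i ⊆ hyperplane (a i) (b i))
    {V V' P : Submodule ℝ C(E, F)} (hV : V.FG) (hV' : V'.FG) (hP : P.FG)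
    (hVP : ∀ f ∈ V, bubble a b Finset.univ ^ 2 • f ∈ P)
    (hV'P : ∀ i, ∀ g ∈ V', bubble a b (Finset.univ.erase i) ^ 2 • g ∈ P) :
    ∃ C₁ : ℝ, 0 < C₁ ∧ ∃ C₂ : ℝ, 0 < C₂ ∧
      ∀ f ∈ V, ∀ g : ι → C(E, F), (∀ i, g i ∈ V') → ∀ w ∈ P,
        (∀ q ∈ P, ∫ x in T, ⟪w x, q x⟫ =
          (∫ x in T, ⟪f x, q x⟫) - ∑ i, ∫ x in e i, ⟪g i x, q x⟫ ∂μH[n]) →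
        C₁ * ((∫ x in T, ‖f x‖ ^ 2) + ∑ i, ∫ x in e i, ‖g i x‖ ^ 2 ∂μH[n]) ≤
          ∫ x in T, ‖w x‖ ^ 2 ∧
        ∫ x in T, ‖w x‖ ^ 2 ≤
          C₂ * ((∫ x in T, ‖f x‖ ^ 2) + ∑ i, ∫ x in e i, ‖g i x‖ ^ 2 ∂μH[n]) := by
  have hν : ∀ f : C(E, F), MemLp f 2 (volume.restrict T) := fun f =>
    memLp_restrict_of_isBounded 2 hT hTb hTb.measure_lt_top f.continuous
  have hμ : ∀ i, ∀ f : C(E, F), MemLp f 2 ((μH[n] : Measure E).restrict (e i)) := fun i f =>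
    memLp_restrict_of_isBounded 2 (he i) (heb i) (hausdorffMeasure_lt_top_of_subset_affineSubspace
      (finrank_direction_hyperplane hE (ha i) (b i)) (heb i) (hsub i)) f.continuous
  refine exists_norm_sq_equiv_of_bubbles hν hμ hV hP (fun _ => hV')
    (ae_restrict_of_ae (ae_bubble_ne_zero ha fun i _ => volume_hyperplane (ha i) (b i)))
    (fun i => ae_bubble_eq_zero ha (Finset.mem_univ i) (he i) (hsub i)) hVP
    (fun i => ae_bubble_ne_zero ha fun j hj => ?_)
    (fun i j hij => ae_bubble_eq_zero ha (Finset.mem_erase.2 ⟨hij, Finset.mem_univ i⟩) (he i)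
      (hsub i)) hV'P
  exact hausdorffMeasure_restrict_hyperplane hE (ha i) (ha j)
    (hinj.ne (Finset.ne_of_mem_erase hj).symm) (he i) (hsub i)

section MvPolynomial

open MvPolynomial

variable {σ : Type*}

theorem totalDegree_pderiv_le {R : Type*} [CommSemiring R] (i : σ) (p : MvPolynomial σ R) :
    (pderiv i p).totalDegree ≤ p.totalDegree - 1 := by
  conv_lhs => rw [p.as_sum, map_sum]
  apply totalDegree_finsetSum_le
  intro s hs
  rw [pderiv_monomial]
  by_cases hsi : s i = 0
  · simp [hsi]
  have hdegree : (s - Finsupp.single i 1).degree + 1 = s.degree := by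
    conv_rhs =>
      rw [← tsub_add_cancel_of_le (Finsupp.single_le_iff.2 (Nat.one_le_iff_ne_zero.2 hsi))]
    rw [map_add, Finsupp.degree_single]
  have hle : s.degree ≤ p.totalDegree := le_totalDegree hs
  exact (totalDegree_monomial_le _ _).trans
    (show (s - Finsupp.single i 1).degree ≤ _ by omega)

theorem hasFDerivAt_mvPolynomial_eval [Fintype σ] (p : MvPolynomial σ ℝ) (x : EuclideanSpace ℝ σ) :
    HasFDerivAt (fun y : EuclideanSpace ℝ σ => eval (fun i => y i) p)
      (∑ i, eval (fun j => x j) (pderiv i p) •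
        (EuclideanSpace.proj i : EuclideanSpace ℝ σ →L[ℝ] ℝ)) x := by
  classical
  induction p using MvPolynomial.induction_on with
  | C c => simpa using hasFDerivAt_const c x
  | add p q hp hq =>
    simp only [map_add]
    exact (hp.fun_add hq).congr_fderiv (by ext v; simp [add_mul, Finset.sum_add_distrib])
  | mul_X p n hp =>
    have hX : HasFDerivAt (fun y : EuclideanSpace ℝ σ => y n)
        (EuclideanSpace.proj n : EuclideanSpace ℝ σ →L[ℝ] ℝ) x :=
      (EuclideanSpace.proj n : EuclideanSpace ℝ σ →L[ℝ] ℝ).hasFDerivAt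
    simp only [map_mul, eval_X]
    refine (hp.fun_mul hX).congr_fderiv ?_
    ext v
    simp [Derivation.leibniz, pderiv_X, Pi.single_apply, apply_ite, mul_add,
      Finset.sum_add_distrib, Finset.mul_sum, mul_comm, mul_left_comm]

end MvPolynomial

namespace IsPolyFun3

variable {k m n : ℕ} {f g : E3 → ℝ}

theorem continuous (hf : IsPolyFun3 k f) : Continuous f := by
  obtain ⟨p, -, hp⟩ := hf
  exact (funext hp : f = _) ▸
    p.continuous_eval.comp (PiLp.continuous_ofLp 2 fun _ : Fin 3 => ℝ)

theorem mul (hf : IsPolyFun3 m f) (hg : IsPolyFun3 n g) (hk : m + n ≤ k) :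
    IsPolyFun3 k fun x => f x * g x := by
  obtain ⟨p, hpm, hp⟩ := hf
  obtain ⟨q, hqn, hq⟩ := hg
  exact ⟨p * q, (MvPolynomial.totalDegree_mul p q).trans (by lia), fun x => by simp [hp, hq]⟩

theorem const_mul (c : ℝ) (hf : IsPolyFun3 k f) : IsPolyFun3 k fun x => c * f x :=
  mul ⟨.C c, by simp, by simp⟩ hf (zero_add k).le

theorem add (hf : IsPolyFun3 k f) (hg : IsPolyFun3 k g) : IsPolyFun3 k fun x => f x + g x := by
  obtain ⟨p, hpk, hp⟩ := hf
  obtain ⟨q, hqk, hq⟩ := hg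
  exact ⟨p + q, (MvPolynomial.totalDegree_add p q).trans (max_le hpk hqk),
    fun x => by simp [hp, hq]⟩

theorem sub (hf : IsPolyFun3 k f) (hg : IsPolyFun3 k g) : IsPolyFun3 k fun x => f x - g x := by
  simpa [sub_eq_add_neg] using hf.add (hg.const_mul (-1))

theorem inner_add_const (a : E3) (b : ℝ) : IsPolyFun3 1 fun x => ⟪a, x⟫ + b := by
  refine ⟨∑ i, .C (a i) * .X i + .C b, ?_, fun x => by simp [PiLp.inner_apply, mul_comm]⟩
  refine (MvPolynomial.totalDegree_add _ _).trans (max_le ?_ (by simp))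
  refine MvPolynomial.totalDegree_finsetSum_le fun i _ => ?_
  exact (MvPolynomial.totalDegree_mul _ _).trans (by simp)

theorem prod {ι : Type*} (s : Finset ι) {f : ι → E3 → ℝ} (hf : ∀ i, IsPolyFun3 1 (f i)) :
    IsPolyFun3 s.card fun x => ∏ i ∈ s, f i x := by
  choose p hp1 hp using hf
  refine ⟨∏ i ∈ s, p i, (MvPolynomial.totalDegree_finsetProd s p).trans ?_, fun x => by simp [hp]⟩
  exact (Finset.sum_le_card_nsmul s _ 1 fun i _ => hp1 i).trans (by simp)

theorem fderiv_single (hf : IsPolyFun3 k f) (j : Fin 3) :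
    IsPolyFun3 (k - 1) fun x => fderiv ℝ f x (EuclideanSpace.single j 1) := by
  obtain ⟨p, hpk, hp⟩ := hf
  refine ⟨MvPolynomial.pderiv j p,
    (totalDegree_pderiv_le j p).trans (Nat.sub_le_sub_right hpk 1), fun x => ?_⟩
  beta_reduce
  rw [funext hp, (hasFDerivAt_mvPolynomial_eval p x).fderiv]
  simp

end IsPolyFun3

namespace IsPolyVF

variable {d k r : ℕ} {F G : E3 → E3}

theorem continuous (hF : IsPolyVF k F) : Continuous F :=
  (PiLp.continuous_toLp 2 fun _ : Fin 3 => ℝ).comp (continuous_pi fun i => (hF i).continuous)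

theorem sub (hF : IsPolyVF k F) (hG : IsPolyVF k G) : IsPolyVF k fun x => F x - G x :=
  fun i => (hF i).sub (hG i)

theorem sq_smul {ψ : E3 → ℝ} (hψ : IsPolyFun3 d ψ) (hF : IsPolyVF k F) (hr : 2 * d + k ≤ r) :
    IsPolyVF r fun x => ψ x ^ 2 • F x := fun i => by
  have hψ2 : IsPolyFun3 (2 * d) fun x => ψ x ^ 2 := by
    simpa only [sq] using hψ.mul hψ (two_mul d).ge
  exact hψ2.mul (hF i) hr

theorem curl3 (hF : IsPolyVF k F) : IsPolyVF (k - 1) (curl3 F) := fun i => by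
  fin_cases i
  exacts [((hF 2).fderiv_single 1).sub ((hF 1).fderiv_single 2),
    ((hF 0).fderiv_single 2).sub ((hF 2).fderiv_single 0),
    ((hF 1).fderiv_single 0).sub ((hF 0).fderiv_single 1)]

theorem cross3 (hF : IsPolyVF k F) (n : E3) : IsPolyVF k fun x => cross3 (F x) n := fun i => by
  have hmul : ∀ i j, IsPolyFun3 k fun x => F x i * n j := fun i j => by
    simpa only [mul_comm] using (hF i).const_mul (n j)
  fin_cases i
  exacts [(hmul 1 2).sub (hmul 2 1), (hmul 2 0).sub (hmul 0 2), (hmul 0 1).sub (hmul 1 0)]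

end IsPolyVF

/-- The space of polynomial vector fields of degree at most `k`, as a subspace of the continuous
vector fields. -/
def polyVF (k : ℕ) : Submodule ℝ C(E3, E3) where
  carrier := {F | IsPolyVF k F}
  add_mem' hF hG i := (hF i).add (hG i)
  zero_mem' _ := ⟨0, by simp, by simp⟩
  smul_mem' c _ hF i := (hF i).const_mul c

theorem polyVF_fg (k : ℕ) : (polyVF k).FG := by
  have hpoly (p : Fin 3 → MvPolynomial.restrictTotalDegree (Fin 3) ℝ k) :
      IsPolyVF k fun x => .toLp 2 fun i => MvPolynomial.eval (fun j => x j) (p i).1 :=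
    fun i => ⟨p i, (MvPolynomial.mem_restrictTotalDegree _ _ _).1 (p i).2, fun _ => rfl⟩
  let evalVF : (Fin 3 → MvPolynomial.restrictTotalDegree (Fin 3) ℝ k) →ₗ[ℝ] polyVF k :=
    { toFun p := ⟨⟨_, (hpoly p).continuous⟩, hpoly p⟩
      map_add' p q := by ext; simp
      map_smul' c p := by ext; simp }
  refine Module.Finite.iff_fg.1 (Module.Finite.of_surjective evalVF fun F => ?_)
  choose p hpk hp using F.2
  refine ⟨fun i => ⟨p i, (MvPolynomial.mem_restrictTotalDegree _ _ _).2 (hpk i)⟩, ?_⟩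
  ext x i
  exact (hp i x).symm

theorem isPolyFun3_bubble {ι : Type*} (a : ι → E3) (b : ι → ℝ) (s : Finset ι) :
    IsPolyFun3 s.card (bubble a b s) := by
  rw [funext (bubble_apply a b s)]
  exact IsPolyFun3.prod s fun i => IsPolyFun3.inner_add_const (a i) (b i)

theorem bubble_sq_smul_mem_polyVF {ι : Type*} (a : ι → E3) (b : ι → ℝ) {s : Finset ι} {k r : ℕ}
    (hr : 2 * s.card + k ≤ r) {F : C(E3, E3)} (hF : F ∈ polyVF k) :
    bubble a b s ^ 2 • F ∈ polyVF r :=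
  IsPolyVF.sq_smul (isPolyFun3_bubble a b s) hF hr

theorem measurableSet_of_eq_isOpen_inter_preimage {X : Type*} [TopologicalSpace X]
    [MeasurableSpace X] [OpensMeasurableSpace X] {s : Set X} {f : X → ℝ} (hf : Continuous f)
    (hs : ∃ U, IsOpen U ∧ s = U ∩ f ⁻¹' {0}) : MeasurableSet s := by
  obtain ⟨U, hU, rfl⟩ := hs
  exact hU.measurableSet.inter (isClosed_singleton.preimage hf).measurableSet

theorem isBounded_of_frontier_eq_iUnion_closure {X ι : Type*} [PseudoMetricSpace X] {T : Set X}
    (hT : Bornology.IsBounded T) {e : ι → Set X} (he : frontier T = ⋃ i, closure (e i)) (i : ι) :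
    Bornology.IsBounded (e i) :=
  hT.closure.subset <| calc
    e i ⊆ closure (e i) := subset_closure
    _ ⊆ frontier T := he ▸ Set.subset_iUnion (fun j => closure (e j)) i
    _ ⊆ closure T := frontier_subset_closure

theorem stmt12_general {ι : Type*} [Fintype ι] {T : Set E3} (hT : MeasurableSet T)
    (hTb : Bornology.IsBounded T) {a : ι → E3} {b : ι → ℝ} {l : ι → E3 → ℝ}
    (hl : ∀ i x, l i x = ⟪a i, x⟫ + b i) (ha : ∀ i, a i ≠ 0)
    (hdistinct : ∀ i j, i ≠ j → l i ⁻¹' {0} ≠ l j ⁻¹' {0}) {e : ι → Set E3}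
    (he : ∀ i, MeasurableSet (e i)) (heb : ∀ i, Bornology.IsBounded (e i))
    (hesub : ∀ i, e i ⊆ l i ⁻¹' {0}) {k r : ℕ} (hr : 2 * Fintype.card ι + (k - 1) ≤ r) :
    ∃ C₁ : ℝ, 0 < C₁ ∧ ∃ C₂ : ℝ, 0 < C₂ ∧
      ∀ v₀ : E3 → E3, IsPolyVF k v₀ →
      ∀ vb : E3 → E3, (∀ i, ∃ w : E3 → E3, IsPolyVF k w ∧ ∀ x ∈ e i, vb x = w x) →
      ∀ W : E3 → E3, IsPolyVF r W →
        (∀ q : E3 → E3, IsPolyVF r q →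
          ∫ x in T, ⟪W x, q x⟫ =
            (∫ x in T, ⟪curl3 v₀ x, q x⟫) -
              ∑ i, ∫ x in e i, ⟪cross3 (vb x - v₀ x) (‖a i‖⁻¹ • a i), q x⟫ ∂μH[2]) →
        C₁ * ((∫ x in T, ‖curl3 v₀ x‖ ^ 2) +
              ∑ i, ∫ x in e i, ‖cross3 (vb x - v₀ x) (‖a i‖⁻¹ • a i)‖ ^ 2 ∂μH[2]) ≤
            (∫ x in T, ‖W x‖ ^ 2) ∧
        (∫ x in T, ‖W x‖ ^ 2) ≤
          C₂ * ((∫ x in T, ‖curl3 v₀ x‖ ^ 2) +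
              ∑ i, ∫ x in e i, ‖cross3 (vb x - v₀ x) (‖a i‖⁻¹ • a i)‖ ^ 2 ∂μH[2]) := by
  classical
  have hplane : ∀ i, (hyperplane (a i) (b i) : Set E3) = l i ⁻¹' {0} := fun i => by
    ext x
    simp [mem_hyperplane_iff (ha i), hl]
  have hinj : Function.Injective fun i => hyperplane (a i) (b i) := fun i j hij => by
    by_contra hne
    exact hdistinct i j hne (by rw [← hplane, ← hplane]; exact congrArg _ hij)
  have hcard (i : ι) : 2 * (Finset.univ.erase i).card + k ≤ r := by
    have hpos := Fintype.card_pos_iff.2 ⟨i⟩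
    rw [Finset.card_erase_of_mem (Finset.mem_univ i), Finset.card_univ]
    omega
  obtain ⟨C₁, hC₁, C₂, hC₂, hequiv⟩ := exists_norm_sq_equiv_of_polyhedron (n := 2)
    finrank_euclideanSpace_fin hT hTb ha hinj he heb (fun i => (hesub i).trans (hplane i).ge)
    (polyVF_fg (k - 1)) (polyVF_fg k) (polyVF_fg r) (fun _ => bubble_sq_smul_mem_polyVF a b hr)
    (fun i _ => bubble_sq_smul_mem_polyVF a b (hcard i))
  refine ⟨C₁, hC₁, C₂, hC₂, fun v₀ hv₀ vb hvb W hW hweak => ?_⟩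
  choose w hw hvbw using hvb
  have hjump (i : ι) : IsPolyVF k fun x => cross3 (w i x - v₀ x) (‖a i‖⁻¹ • a i) :=
    ((hw i).sub hv₀).cross3 _
  have hinner (q : E3 → E3) (i : ι) := setIntegral_congr_fun (μ := μH[2]) (he i) fun x hx =>
    congrArg (fun y => ⟪cross3 (y - v₀ x) (‖a i‖⁻¹ • a i), q x⟫) (hvbw i x hx)
  have hnorm (i : ι) := setIntegral_congr_fun (μ := μH[2]) (he i) fun x hx =>
    congrArg (fun y => ‖cross3 (y - v₀ x) (‖a i‖⁻¹ • a i)‖ ^ 2) (hvbw i x hx)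
  simp only [hinner] at hweak
  simp only [hnorm]
  exact_mod_cast hequiv ⟨_, hv₀.curl3.continuous⟩ hv₀.curl3 (fun i => ⟨_, (hjump i).continuous⟩)
    hjump ⟨W, hW.continuous⟩ hW fun q hq => by exact_mod_cast hweak q hq

/-- Per-element norm equivalence for the discrete weak curl (Lemma 5.3 of the paper):
on a (possibly non-convex) polyhedral element `T` with faces `e i` lying in the hyperplanes
`{l i = 0}` with unit normals `‖a i‖⁻¹ • a i`, the squared `L²(T)` norm of the discrete weak
curl `W = ∇_{w,r,T}×{v₀, v_b}` is equivalent to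
`‖∇×v₀‖²_{L²(T)} + Σᵢ ∫_{eᵢ} |(v_b − v₀)×nᵢ|² dμH²`. -/
theorem stmt12 (T : Set E3) (hTne : T.Nonempty) (hTo : IsOpen T)
    (hTb : Bornology.IsBounded T)
    (N : ℕ) (a : Fin N → E3) (b : Fin N → ℝ) (l : Fin N → E3 → ℝ)
    (hl : ∀ i x, l i x = ⟪a i, x⟫ + b i)
    (ha : ∀ i, a i ≠ 0)
    (hdistinct : ∀ i j, i ≠ j → (l i) ⁻¹' {0} ≠ (l j) ⁻¹' {0})
    (e : Fin N → Set E3)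
    (hene : ∀ i, (e i).Nonempty)
    (hesub : ∀ i, ∃ U : Set E3, IsOpen U ∧ e i = U ∩ (l i) ⁻¹' {0})
    (hbd : frontier T = ⋃ i, closure (e i))
    (hnull : ∀ i j, i ≠ j → μH[2] (closure (e i) ∩ closure (e j)) = 0)
    (hfin : μH[2] (frontier T) < ⊤)
    (M : E3) (hM : M ∈ T) (hlM : ∀ i, l i M ≠ 0)
    (k r : ℕ) (hk : 1 ≤ k) (hr : max (2 * N + k - 1) (k + 2 * (N - 1)) ≤ r) :
    ∃ C₁ : ℝ, 0 < C₁ ∧ ∃ C₂ : ℝ, 0 < C₂ ∧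
      ∀ v₀ : E3 → E3, IsPolyVF k v₀ →
      ∀ vb : E3 → E3, (∀ i, ∃ w : E3 → E3, IsPolyVF k w ∧ ∀ x ∈ e i, vb x = w x) →
      ∀ W : E3 → E3, IsPolyVF r W →
        (∀ q : E3 → E3, IsPolyVF r q →
          ∫ x in T, ⟪W x, q x⟫ =
            (∫ x in T, ⟪curl3 v₀ x, q x⟫) -
              ∑ i, ∫ x in e i, ⟪cross3 (vb x - v₀ x) (‖a i‖⁻¹ • a i), q x⟫ ∂μH[2]) →
        C₁ * ((∫ x in T, ‖curl3 v₀ x‖ ^ 2) +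
              ∑ i, ∫ x in e i, ‖cross3 (vb x - v₀ x) (‖a i‖⁻¹ • a i)‖ ^ 2 ∂μH[2]) ≤
            (∫ x in T, ‖W x‖ ^ 2) ∧
        (∫ x in T, ‖W x‖ ^ 2) ≤
          C₂ * ((∫ x in T, ‖curl3 v₀ x‖ ^ 2) +
              ∑ i, ∫ x in e i, ‖cross3 (vb x - v₀ x) (‖a i‖⁻¹ • a i)‖ ^ 2 ∂μH[2]) := by
  have hlc (i : Fin N) : Continuous (l i) := by rw [funext (hl i)]; fun_prop
  exact stmt12_general hTo.measurableSet hTb hl ha hdistinct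
    (fun i => measurableSet_of_eq_isOpen_inter_preimage (hlc i) (hesub i))
    (isBounded_of_frontier_eq_iUnion_closure hTb hbd)
    (fun i => (hesub i).elim fun _ hU => hU.2.trans_subset Set.inter_subset_right)
    (by rw [Fintype.card_fin]; omega)
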